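/- Let 0 < ε ≤ 1/2 and 0 ≤ δ ≤ 1/2, and set p = εδ(2−ε) + ε²(1−δ). Over the noisy-feedback rewrite channel with parameters (ε, δ), let U be any finite-valued random variable, let X₁ ∈ {0,1} be a (possibly randomized) function of U, and let X₂ ∈ {no-rewrite, 0, 1} be a (possibly randomized) function of (U, X₁, T), with all local randomness independent of the channel noises. Then p ≤ 1/2, and for every u with P(U = u) > 0, p ≤ P(Y₂ = 1 | U = u) ≤ 1 − p. Consequently, if P(Y₂ = 1) = ε, then I(U; Y₂) ≤ h_b(ε) − h_b(εδ(2−ε) + ε²(1−δ)). -/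

import Mathlib

open Classical

noncomputable def pOf {Ω α : Type*} [Fintype Ω] (μ : Ω → ℝ) (X : Ω → α) (x : α) : ℝ :=
  ∑ ω, if X ω = x then μ ω else 0

noncomputable def pr {Ω : Type*} [Fintype Ω] (μ : Ω → ℝ) (E : Ω → Prop) : ℝ :=
  ∑ ω, if E ω then μ ω else 0

noncomputable def KL {α : Type*} [Fintype α] (p q : α → ℝ) : ℝ :=
  ∑ x, p x * Real.logb 2 (p x / q x)

noncomputable def TV {α : Type*} [Fintype α] (p q : α → ℝ) : ℝ :=
  (∑ x, |p x - q x|) / 2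

noncomputable def Hent {Ω α : Type*} [Fintype Ω] [Fintype α] (μ : Ω → ℝ) (X : Ω → α) : ℝ :=
  -∑ x, pOf μ X x * Real.logb 2 (pOf μ X x)

noncomputable def condH {Ω α β : Type*} [Fintype Ω] [Fintype α] [Fintype β]
    (μ : Ω → ℝ) (X : Ω → α) (Y : Ω → β) : ℝ :=
  Hent μ (fun ω => (X ω, Y ω)) - Hent μ Y

noncomputable def Iinfo {Ω α β : Type*} [Fintype Ω] [Fintype α] [Fintype β]
    (μ : Ω → ℝ) (X : Ω → α) (Y : Ω → β) : ℝ :=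
  Hent μ X + Hent μ Y - Hent μ (fun ω => (X ω, Y ω))

noncomputable def hb (p : ℝ) : ℝ :=
  -(p * Real.logb 2 p) - (1 - p) * Real.logb 2 (1 - p)

noncomputable def bern (p : ℝ) : Bool → ℝ := fun b => if b then p else 1 - p

/-!
Whatever the encoder does, on the event `T = t` it can either keep `Y₁` or rewrite, so
`P(Y₂ = b, T = t) ≥ min (P(Y₁ = b, T = t), ε P(T = t))`. For `b ≠ x₁` these two minima add up to
exactly `p`, and for `b = x₁` they add up to at least `p`; hence both output symbols have
conditional probability at least `p`. Since `h_b` is symmetric about `1/2` and increasing on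
`[0, 1/2]`, this gives `H(Y₂ | U) ≥ h_b(p)`, and `I(U; Y₂) = H(Y₂) - H(Y₂ | U)`.
-/

section Probability

variable {Ω α : Type*} [Fintype Ω]

lemma pr_nonneg {μ : Ω → ℝ} (hμ : ∀ ω, 0 ≤ μ ω) (E : Ω → Prop) : 0 ≤ pr μ E :=
  Finset.sum_nonneg fun ω _ => by split_ifs <;> simp [hμ]

lemma sum_pr_fiberwise [Fintype α] (μ : Ω → ℝ) (X : Ω → α) (E : Ω → Prop) :
    ∑ x, pr μ (fun ω => X ω = x ∧ E ω) = pr μ E := by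
  unfold pr
  rw [Finset.sum_comm]
  exact Finset.sum_congr rfl fun ω _ => by by_cases hE : E ω <;> simp [hE]

lemma pOf_prodMk {β : Type*} (μ : Ω → ℝ) (X : Ω → α) (Y : Ω → β) (x : α) (y : β) :
    pOf μ (fun ω => (X ω, Y ω)) (x, y) = pr μ (fun ω => X ω = x ∧ Y ω = y) :=
  congrArg (pr μ) (funext fun _ => propext Prod.mk_inj)

lemma sum_pOf [Fintype α] (μ : Ω → ℝ) (X : Ω → α) : ∑ x, pOf μ X x = ∑ ω, μ ω := by
  simpa [pr, pOf] using sum_pr_fiberwise μ X fun _ => True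

lemma pr_mul_eq_sum {W N : Type*} [Fintype W] [Fintype N] (ν : W → ℝ) (κ : N → ℝ)
    (E : W → N → Prop) :
    pr (fun ω : W × N => ν ω.1 * κ ω.2) (fun ω => E ω.1 ω.2) = ∑ w, ν w * pr κ (E w) := by
  simp only [pr, Fintype.sum_prod_type, Finset.mul_sum, mul_ite, mul_zero]

lemma mul_pr_le_pr_and {W N : Type*} [Fintype W] [Fintype N] {ν : W → ℝ} {κ : N → ℝ} {p : ℝ}
    (hν : ∀ w, 0 ≤ ν w) (hκ : ∑ n, κ n = 1) {E : W → N → Prop} (hE : ∀ w, p ≤ pr κ (E w))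
    (A : W → Prop) :
    p * pr (fun ω : W × N => ν ω.1 * κ ω.2) (fun ω => A ω.1) ≤
      pr (fun ω : W × N => ν ω.1 * κ ω.2) (fun ω => E ω.1 ω.2 ∧ A ω.1) := by
  rw [pr_mul_eq_sum ν κ fun w _ => A w, pr_mul_eq_sum ν κ fun w n => E w n ∧ A w, Finset.mul_sum]
  refine Finset.sum_le_sum fun w _ => ?_
  by_cases hA : A w
  · simpa [hA, pr, hκ, mul_comm] using mul_le_mul_of_nonneg_left (hE w) (hν w)
  · simp [hA, pr]

end Probability

section Entropy

variable {Ω α : Type*} [Fintype Ω] [Fintype α] {μ : Ω → ℝ}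

lemma hb_eq_binEntropy_div_log_two (x : ℝ) : hb x = Real.binEntropy x / Real.log 2 := by
  simp only [hb, Real.binEntropy_eq_negMulLog_add_negMulLog_one_sub, Real.negMulLog, Real.logb]
  ring

lemma hb_le_hb_of_le_of_le_one_sub {p q : ℝ} (hp : 0 ≤ p) (hpq : p ≤ q) (hqp : q ≤ 1 - p) :
    hb p ≤ hb q := by
  simp only [hb_eq_binEntropy_div_log_two]
  refine div_le_div_of_nonneg_right ?_ (Real.log_nonneg one_le_two)
  have mono := Real.binEntropy_strictMonoOn.monotoneOn
  rcases le_total q 2⁻¹ with hq | hq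
  · exact mono ⟨hp, hpq.trans hq⟩ ⟨hp.trans hpq, hq⟩ hpq
  · rw [← Real.binEntropy_one_sub q]
    exact mono ⟨hp, by linarith⟩ ⟨by linarith, by linarith⟩ (by linarith)

lemma add_mul_hb_div_add {c d : ℝ} (h : c + d ≠ 0) :
    (c + d) * hb (c / (c + d)) =
      (c + d) * Real.logb 2 (c + d) - c * Real.logb 2 c - d * Real.logb 2 d := by
  have mul_logb_div (x : ℝ) : (c + d) * (x / (c + d) * Real.logb 2 (x / (c + d))) =
      x * Real.logb 2 x - x * Real.logb 2 (c + d) := by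
    rcases eq_or_ne x 0 with rfl | hx
    · simp
    · rw [Real.logb_div hx h]
      field_simp
  have one_sub_div : 1 - c / (c + d) = d / (c + d) := by field_simp; ring
  rw [hb, one_sub_div]
  linarith [mul_logb_div c, mul_logb_div d]

lemma Hent_bool (hμ : ∑ ω, μ ω = 1) (Y : Ω → Bool) : Hent μ Y = hb (pOf μ Y true) := by
  have pOf_false : pOf μ Y false = 1 - pOf μ Y true := by
    have := sum_pOf μ Y
    rw [Fintype.sum_bool, hμ] at this
    linarith
  rw [Hent, Fintype.sum_bool, pOf_false, hb]
  ring

lemma Hent_prodMk_comm {β : Type*} [Fintype β] (μ : Ω → ℝ) (X : Ω → α) (Y : Ω → β) :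
    Hent μ (fun ω => (X ω, Y ω)) = Hent μ (fun ω => (Y ω, X ω)) := by
  simp only [Hent, Fintype.sum_prod_type, pOf_prodMk]
  rw [Finset.sum_comm]
  simp only [and_comm]

lemma Iinfo_eq_Hent_sub_condH {β : Type*} [Fintype β] (μ : Ω → ℝ) (X : Ω → α) (Y : Ω → β) :
    Iinfo μ X Y = Hent μ Y - condH μ Y X := by
  rw [Iinfo, condH, Hent_prodMk_comm]
  ring

lemma condH_bool (hμ : ∀ ω, 0 ≤ μ ω) (X : Ω → α) (Y : Ω → Bool) :
    condH μ Y X =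
      ∑ x, pOf μ X x * hb (pr μ (fun ω => Y ω = true ∧ X ω = x) / pOf μ X x) := by
  simp only [condH, Hent, Fintype.sum_prod_type_right, pOf_prodMk, Fintype.sum_bool]
  rw [neg_sub_neg, ← Finset.sum_sub_distrib]
  refine Finset.sum_congr rfl fun x _ => ?_
  have marginal : pOf μ X x =
      pr μ (fun ω => Y ω = true ∧ X ω = x) + pr μ (fun ω => Y ω = false ∧ X ω = x) := by
    rw [← Fintype.sum_bool fun b => pr μ fun ω => Y ω = b ∧ X ω = x, sum_pr_fiberwise]
    rfl
  have htrue := pr_nonneg hμ fun ω => Y ω = true ∧ X ω = x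
  have hfalse := pr_nonneg hμ fun ω => Y ω = false ∧ X ω = x
  rw [marginal]
  by_cases h : pr μ (fun ω => Y ω = true ∧ X ω = x) + pr μ (fun ω => Y ω = false ∧ X ω = x) = 0
  · obtain ⟨ht, hf⟩ := (add_eq_zero_iff_of_nonneg htrue hfalse).1 h
    simp [ht, hf]
  · rw [add_mul_hb_div_add h]
    ring

lemma hb_le_condH {p : ℝ} (hp : 0 ≤ p) (hμ : ∀ ω, 0 ≤ μ ω) (hμ_sum : ∑ ω, μ ω = 1)
    {X : Ω → α} {Y : Ω → Bool}
    (h : ∀ x, pOf μ X x ≠ 0 →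
      p ≤ pr μ (fun ω => Y ω = true ∧ X ω = x) / pOf μ X x ∧
        pr μ (fun ω => Y ω = true ∧ X ω = x) / pOf μ X x ≤ 1 - p) :
    hb p ≤ condH μ Y X := by
  rw [condH_bool hμ]
  calc hb p = ∑ x, pOf μ X x * hb p := by rw [← Finset.sum_mul, sum_pOf, hμ_sum, one_mul]
    _ ≤ _ := Finset.sum_le_sum fun x _ => ?_
  by_cases hx : pOf μ X x = 0
  · simp [hx]
  · exact mul_le_mul_of_nonneg_left
      (hb_le_hb_of_le_of_le_one_sub hp (h x hx).1 (h x hx).2) (pr_nonneg hμ _)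

end Entropy

section BinaryNoise

variable {ε δ : ℝ}

/-- The binary convolution `ε ⋆ δ`: the success probability of the sum modulo 2 of independent
`Bern(ε)` and `Bern(δ)` variables. It is the crossover probability from `X₁` to the feedback `T`. -/
noncomputable def binConv (ε δ : ℝ) : ℝ := ε * (1 - δ) + (1 - ε) * δ

lemma binConv_le_one_half (hε : ε ≤ 1 / 2) (hδ : δ ≤ 1 / 2) : binConv ε δ ≤ 1 / 2 := by
  rw [binConv]
  nlinarith [mul_nonneg (sub_nonneg.2 hε) (sub_nonneg.2 hδ)]

lemma binConv_le_one_sub_right (hε : ε ≤ 1) (hδ : δ ≤ 1 / 2) : binConv ε δ ≤ 1 - δ := by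
  rw [binConv]
  nlinarith [mul_nonneg (sub_nonneg.2 hε) (sub_nonneg.2 hδ)]

lemma right_le_binConv (hε : 0 ≤ ε) (hδ : δ ≤ 1 / 2) : δ ≤ binConv ε δ := by
  rw [binConv]
  nlinarith [mul_nonneg hε (sub_nonneg.2 hδ)]

lemma le_bern (hε : ε ≤ 1 / 2) (b : Bool) : ε ≤ bern ε b := by
  cases b <;> simp only [bern] <;> grind

lemma bern_nonneg (hε : 0 ≤ ε) (hε' : ε ≤ 1) (b : Bool) : 0 ≤ bern ε b := by
  cases b <;> simp [bern, hε, hε']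

/-- The quantity `p` of the theorem: the least probability that an encoder can give to an output
symbol of the rewrite channel. -/
noncomputable def minOutputProb (ε δ : ℝ) : ℝ := ε * δ * (2 - ε) + ε ^ 2 * (1 - δ)

lemma minOutputProb_eq_mul (ε δ : ℝ) : minOutputProb ε δ = ε * (δ + binConv ε δ) := by
  rw [minOutputProb, binConv]
  ring

lemma minOutputProb_nonneg (hε : 0 ≤ ε) (hδ0 : 0 ≤ δ) (hδ1 : δ ≤ 1 / 2) :
    0 ≤ minOutputProb ε δ := by
  rw [minOutputProb_eq_mul]
  exact mul_nonneg hε (add_nonneg hδ0 (hδ0.trans (right_le_binConv hε hδ1)))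

lemma minOutputProb_le_left (hε0 : 0 ≤ ε) (hε1 : ε ≤ 1) (hδ : δ ≤ 1 / 2) :
    minOutputProb ε δ ≤ ε := by
  rw [minOutputProb_eq_mul]
  exact mul_le_of_le_one_right hε0 (by linarith [binConv_le_one_sub_right hε1 hδ])

end BinaryNoise

section RewriteChannel

variable {ε δ : ℝ}

/-- The joint law of the channel noises `(E₁, E′, E₂)`. -/
noncomputable def noiseLaw (ε δ : ℝ) (n : Bool × Bool × Bool) : ℝ :=
  bern ε n.1 * bern δ n.2.1 * bern ε n.2.2

/-- The feedback `T` when `x₁` is sent and the noises `(E₁, E′, E₂)` take the value `n`. -/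
def feedback (x₁ : Bool) (n : Bool × Bool × Bool) : Bool :=
  Bool.xor (Bool.xor x₁ n.1) n.2.1

/-- The final output `Y₂` when the second-round input is `a`, with `none` standing for
no-rewrite. -/
def secondRound (y₁ e₂ : Bool) (a : Option Bool) : Bool :=
  a.elim y₁ fun b => Bool.xor b e₂

/-- The final output `Y₂` of the encoder that sends `x₁` in the first round and `x₂ t` in the second
round upon feedback `t`, when the noises `(E₁, E′, E₂)` take the value `n`. -/
def rewriteOutput (x₁ : Bool) (x₂ : Bool → Option Bool) (n : Bool × Bool × Bool) : Bool :=
  secondRound (Bool.xor x₁ n.1) n.2.2 (x₂ (feedback x₁ n))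

lemma noiseLaw_nonneg (hε0 : 0 ≤ ε) (hε1 : ε ≤ 1) (hδ0 : 0 ≤ δ) (hδ1 : δ ≤ 1)
    (n : Bool × Bool × Bool) : 0 ≤ noiseLaw ε δ n :=
  mul_nonneg (mul_nonneg (bern_nonneg hε0 hε1 _) (bern_nonneg hδ0 hδ1 _)) (bern_nonneg hε0 hε1 _)

lemma sum_noiseLaw (ε δ : ℝ) : ∑ n, noiseLaw ε δ n = 1 := by
  simp only [noiseLaw, Fintype.sum_prod_type, Fintype.sum_bool, bern]
  grind

lemma pr_feedback_and_keep (ε δ : ℝ) (x₁ t b : Bool) :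
    pr (noiseLaw ε δ) (fun n => feedback x₁ n = t ∧ Bool.xor x₁ n.1 = b) =
      bern ε (Bool.xor x₁ b) * bern δ (Bool.xor b t) := by
  cases x₁ <;> cases t <;> cases b <;>
    simp [pr, noiseLaw, feedback, bern, Fintype.sum_prod_type] <;> ring

lemma pr_feedback_and_rewrite (ε δ : ℝ) (x₁ t b c : Bool) :
    pr (noiseLaw ε δ) (fun n => feedback x₁ n = t ∧ Bool.xor c n.2.2 = b) =
      bern (binConv ε δ) (Bool.xor x₁ t) * bern ε (Bool.xor c b) := by
  cases x₁ <;> cases t <;> cases b <;> cases c <;>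
    simp [pr, noiseLaw, feedback, bern, binConv, Fintype.sum_prod_type] <;> ring

lemma min_le_pr_feedback_and_rewriteOutput (hε0 : 0 ≤ ε) (hε1 : ε ≤ 1 / 2) (hδ0 : 0 ≤ δ)
    (hδ1 : δ ≤ 1 / 2) (x₁ : Bool) (x₂ : Bool → Option Bool) (t b : Bool) :
    min (bern ε (Bool.xor x₁ b) * bern δ (Bool.xor b t))
        (ε * bern (binConv ε δ) (Bool.xor x₁ t)) ≤
      pr (noiseLaw ε δ) (fun n => feedback x₁ n = t ∧ rewriteOutput x₁ x₂ n = b) := by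
  have event_eq : (fun n => feedback x₁ n = t ∧ rewriteOutput x₁ x₂ n = b) =
      fun n => feedback x₁ n = t ∧ secondRound (Bool.xor x₁ n.1) n.2.2 (x₂ t) = b :=
    funext fun n => propext (and_congr_right fun h => by rw [rewriteOutput, h])
  rw [event_eq]
  rcases x₂ t with _ | c
  · exact (min_le_left _ _).trans_eq (pr_feedback_and_keep ε δ x₁ t b).symm
  · refine (min_le_right _ _).trans ?_
    have hT : 0 ≤ bern (binConv ε δ) (Bool.xor x₁ t) :=
      bern_nonneg (hδ0.trans (right_le_binConv hε0 hδ1))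
        ((binConv_le_one_half hε1 hδ1).trans (by norm_num)) _
    calc ε * bern (binConv ε δ) (Bool.xor x₁ t)
        ≤ bern (binConv ε δ) (Bool.xor x₁ t) * bern ε (Bool.xor c b) := by
          rw [mul_comm]
          exact mul_le_mul_of_nonneg_left (le_bern hε1 _) hT
      _ = _ := (pr_feedback_and_rewrite ε δ x₁ t b c).symm

lemma minOutputProb_eq_min_add_min (hε0 : 0 ≤ ε) (hε1 : ε ≤ 1) (hδ : δ ≤ 1 / 2) :
    minOutputProb ε δ =
      min (ε * δ) (ε * (1 - binConv ε δ)) + min (ε * (1 - δ)) (ε * binConv ε δ) := by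
  have hT := binConv_le_one_sub_right hε1 hδ
  rw [minOutputProb_eq_mul, min_eq_left (mul_le_mul_of_nonneg_left (by linarith) hε0),
    min_eq_right (mul_le_mul_of_nonneg_left hT hε0), mul_add]

lemma minOutputProb_le_min_add_min (hε0 : 0 ≤ ε) (hε1 : ε ≤ 1 / 2) (hδ0 : 0 ≤ δ)
    (hδ1 : δ ≤ 1 / 2) :
    minOutputProb ε δ ≤
      min ((1 - ε) * (1 - δ)) (ε * (1 - binConv ε δ)) + min ((1 - ε) * δ) (ε * binConv ε δ) := by
  have rewrite_le_keep : ε * (1 - binConv ε δ) ≤ (1 - ε) * (1 - δ) :=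
    mul_le_mul (by linarith) (by linarith [right_le_binConv hε0 hδ1])
      (by linarith [binConv_le_one_half hε1 hδ1]) (by linarith)
  rw [min_eq_right rewrite_le_keep, ← min_add_add_left, le_min_iff]
  constructor
  · rw [minOutputProb_eq_mul]
    have hδε : ε * δ ≤ (1 - ε) * δ := mul_le_mul_of_nonneg_right (by linarith) hδ0
    have hT : ε * binConv ε δ ≤ ε * (1 - binConv ε δ) :=
      mul_le_mul_of_nonneg_left (by linarith [binConv_le_one_half hε1 hδ1]) hε0
    linarith
  · linarith [minOutputProb_le_left hε0 (by linarith) hδ1]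

lemma minOutputProb_le_pr_rewriteOutput (hε0 : 0 ≤ ε) (hε1 : ε ≤ 1 / 2) (hδ0 : 0 ≤ δ)
    (hδ1 : δ ≤ 1 / 2) (x₁ : Bool) (x₂ : Bool → Option Bool) (b : Bool) :
    minOutputProb ε δ ≤ pr (noiseLaw ε δ) (fun n => rewriteOutput x₁ x₂ n = b) := by
  have flipped := (minOutputProb_eq_min_add_min hε0 (hε1.trans (by norm_num)) hδ1).le
  have kept := minOutputProb_le_min_add_min hε0 hε1 hδ0 hδ1
  rw [← sum_pr_fiberwise _ (feedback x₁)]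
  refine le_trans ?_ (Finset.sum_le_sum fun t _ =>
    min_le_pr_feedback_and_rewriteOutput hε0 hε1 hδ0 hδ1 x₁ x₂ t b)
  cases x₁ <;> cases b <;> simp [bern] <;> linarith

/-- The joint law of the encoder's local randomness, of law `ν`, and the independent channel noises
`(E₁, E′, E₂)`. -/
noncomputable def channelLaw {W : Type*} (ν : W → ℝ) (ε δ : ℝ) (ω : W × Bool × Bool × Bool) : ℝ :=
  ν ω.1 * bern ε ω.2.1 * bern δ ω.2.2.1 * bern ε ω.2.2.2

variable {W : Type*} {ν : W → ℝ}

lemma channelLaw_eq_mul_noiseLaw (ν : W → ℝ) (ε δ : ℝ) :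
    channelLaw ν ε δ = fun ω => ν ω.1 * noiseLaw ε δ ω.2 := by
  funext ω
  rw [channelLaw, noiseLaw]
  ring

lemma channelLaw_nonneg (hε0 : 0 ≤ ε) (hε1 : ε ≤ 1) (hδ0 : 0 ≤ δ) (hδ1 : δ ≤ 1)
    (hν : ∀ w, 0 ≤ ν w) (ω : W × Bool × Bool × Bool) : 0 ≤ channelLaw ν ε δ ω := by
  rw [channelLaw_eq_mul_noiseLaw]
  exact mul_nonneg (hν _) (noiseLaw_nonneg hε0 hε1 hδ0 hδ1 _)

variable [Fintype W]

lemma sum_channelLaw (ν : W → ℝ) (ε δ : ℝ) : ∑ ω, channelLaw ν ε δ ω = ∑ w, ν w := by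
  rw [channelLaw_eq_mul_noiseLaw, Fintype.sum_prod_type]
  simp only [← Finset.mul_sum, sum_noiseLaw, mul_one]

lemma minOutputProb_mul_pr_le (hε0 : 0 ≤ ε) (hε1 : ε ≤ 1 / 2) (hδ0 : 0 ≤ δ) (hδ1 : δ ≤ 1 / 2)
    (hν : ∀ w, 0 ≤ ν w) (X₁ : W → Bool) (X₂ : W → Bool → Option Bool) (b : Bool)
    (A : W → Prop) :
    minOutputProb ε δ * pr (channelLaw ν ε δ) (fun ω => A ω.1) ≤
      pr (channelLaw ν ε δ) (fun ω => rewriteOutput (X₁ ω.1) (X₂ ω.1) ω.2 = b ∧ A ω.1) := by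
  rw [channelLaw_eq_mul_noiseLaw]
  exact mul_pr_le_pr_and hν (sum_noiseLaw ε δ)
    (fun w => minOutputProb_le_pr_rewriteOutput hε0 hε1 hδ0 hδ1 (X₁ w) (X₂ w) b) A

lemma pr_rewriteOutput_div_mem_Icc (hε0 : 0 ≤ ε) (hε1 : ε ≤ 1 / 2) (hδ0 : 0 ≤ δ)
    (hδ1 : δ ≤ 1 / 2) (hν : ∀ w, 0 ≤ ν w) (X₁ : W → Bool) (X₂ : W → Bool → Option Bool)
    {A : W → Prop} (hA : pr (channelLaw ν ε δ) (fun ω => A ω.1) ≠ 0) :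
    pr (channelLaw ν ε δ) (fun ω => rewriteOutput (X₁ ω.1) (X₂ ω.1) ω.2 = true ∧ A ω.1) /
        pr (channelLaw ν ε δ) (fun ω => A ω.1) ∈
      Set.Icc (minOutputProb ε δ) (1 - minOutputProb ε δ) := by
  have hA_pos : 0 < pr (channelLaw ν ε δ) (fun ω => A ω.1) :=
    (pr_nonneg (channelLaw_nonneg hε0 (by linarith) hδ0 (by linarith) hν) _).lt_of_ne' hA
  have htrue := minOutputProb_mul_pr_le hε0 hε1 hδ0 hδ1 hν X₁ X₂ true A
  have hfalse := minOutputProb_mul_pr_le hε0 hε1 hδ0 hδ1 hν X₁ X₂ false A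
  have total := sum_pr_fiberwise (channelLaw ν ε δ)
    (fun ω => rewriteOutput (X₁ ω.1) (X₂ ω.1) ω.2) (fun ω => A ω.1)
  rw [Fintype.sum_bool] at total
  exact ⟨(le_div_iff₀ hA_pos).2 htrue, (div_le_iff₀ hA_pos).2 (by linarith)⟩

end RewriteChannel

theorem stmt10_general {W 𝒰 : Type*} [Fintype W] [Fintype 𝒰] {ε δ : ℝ} (hε0 : 0 ≤ ε)
    (hε1 : ε ≤ 1 / 2) (hδ0 : 0 ≤ δ) (hδ1 : δ ≤ 1 / 2) {ν : W → ℝ} (hν0 : ∀ w, 0 ≤ ν w)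
    (hν1 : ∑ w, ν w = 1) (U : W → 𝒰) (X₁ : W → Bool) (X₂ : W → Bool → Option Bool) :
    let p := minOutputProb ε δ
    let μ := channelLaw ν ε δ
    let Y₂ : W × Bool × Bool × Bool → Bool := fun ω => rewriteOutput (X₁ ω.1) (X₂ ω.1) ω.2
    p ≤ 1 / 2
    ∧ (∀ u, pr μ (fun ω => U ω.1 = u) ≠ 0 →
        p ≤ pr μ (fun ω => Y₂ ω = true ∧ U ω.1 = u) / pr μ (fun ω => U ω.1 = u)
        ∧ pr μ (fun ω => Y₂ ω = true ∧ U ω.1 = u) / pr μ (fun ω => U ω.1 = u) ≤ 1 - p)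
    ∧ Iinfo μ (fun ω => U ω.1) Y₂ ≤ hb (pr μ (fun ω => Y₂ ω = true)) - hb p := by
  intro p μ Y₂
  have hμ0 : ∀ ω, 0 ≤ μ ω := channelLaw_nonneg hε0 (by linarith) hδ0 (by linarith) hν0
  have hμ1 : ∑ ω, μ ω = 1 := (sum_channelLaw ν ε δ).trans hν1
  have hcond (u : 𝒰) (hu : pr μ (fun ω => U ω.1 = u) ≠ 0) :=
    pr_rewriteOutput_div_mem_Icc hε0 hε1 hδ0 hδ1 hν0 X₁ X₂ (A := fun w => U w = u) hu
  refine ⟨(minOutputProb_le_left hε0 (by linarith) hδ1).trans hε1, hcond, ?_⟩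
  rw [Iinfo_eq_Hent_sub_condH, Hent_bool hμ1]
  exact sub_le_sub_left (hb_le_condH (minOutputProb_nonneg hε0 hδ0 hδ1) hμ0 hμ1 hcond) _

/-- Converse for the noisy-feedback rewrite channel with parameters
`(ε, δ)`, `0 < ε ≤ 1/2`, `0 ≤ δ ≤ 1/2`, and `p = εδ(2−ε) + ε²(1−δ)`: for an arbitrary
finite-valued `U`, encoder `X₁` depending on the local randomness `w`, and rewrite map
`X₂` depending on `(w, T)` (with `w ~ ν` independent of the noises
`E₁ ~ Bern(ε)`, `E′ ~ Bern(δ)`, `E₂ ~ Bern(ε)`), one has `p ≤ 1/2` and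
`p ≤ P(Y₂=1 | U=u) ≤ 1−p` for all `u` with `P(U=u) > 0`; consequently, if
`P(Y₂=1) = ε` then `I(U;Y₂) ≤ h_b(ε) − h_b(εδ(2−ε)+ε²(1−δ))`. -/
theorem stmt10 {W 𝒰 : Type*} [Fintype W] [Fintype 𝒰]
    (ε δ : ℝ) (hε0 : 0 < ε) (hε1 : ε ≤ 1 / 2) (hδ0 : 0 ≤ δ) (hδ1 : δ ≤ 1 / 2)
    (ν : W → ℝ) (hν0 : ∀ w, 0 ≤ ν w) (hν1 : ∑ w, ν w = 1)
    (U : W → 𝒰) (X1 : W → Bool) (X2 : W → Bool → Option Bool) :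
    let p : ℝ := ε * δ * (2 - ε) + ε ^ 2 * (1 - δ)
    let μ : W × Bool × Bool × Bool → ℝ :=
      fun ω => ν ω.1 * bern ε ω.2.1 * bern δ ω.2.2.1 * bern ε ω.2.2.2
    let Uv : W × Bool × Bool × Bool → 𝒰 := fun ω => U ω.1
    let Y1 : W × Bool × Bool × Bool → Bool := fun ω => Bool.xor (X1 ω.1) ω.2.1
    let T : W × Bool × Bool × Bool → Bool := fun ω => Bool.xor (Y1 ω) ω.2.2.1
    let Y2 : W × Bool × Bool × Bool → Bool :=
      fun ω => match X2 ω.1 (T ω) with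
        | none => Y1 ω
        | some b => Bool.xor b ω.2.2.2
    p ≤ 1 / 2
    ∧ (∀ u : 𝒰, pr μ (fun ω => Uv ω = u) ≠ 0 →
        p ≤ pr μ (fun ω => Y2 ω = true ∧ Uv ω = u) / pr μ (fun ω => Uv ω = u)
        ∧ pr μ (fun ω => Y2 ω = true ∧ Uv ω = u) / pr μ (fun ω => Uv ω = u) ≤ 1 - p)
    ∧ (pr μ (fun ω => Y2 ω = true) = ε →
        Iinfo μ Uv Y2 ≤ hb ε - hb (ε * δ * (2 - ε) + ε ^ 2 * (1 - δ))) := by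
  intro p μ Uv Y1 T Y2
  have hY2 : Y2 = fun ω => rewriteOutput (X1 ω.1) (X2 ω.1) ω.2 := by
    funext ω
    simp only [Y2, T, Y1, rewriteOutput, secondRound, feedback]
    split <;> simp only [*, Option.elim]
  obtain ⟨hp, hcond, hI⟩ := stmt10_general hε0.le hε1 hδ0 hδ1 hν0 hν1 U X1 X2
  exact hY2 ▸ ⟨hp, hcond, fun hY => hI.trans_eq (congrArg (hb · - _) hY)⟩
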